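/- Let K be a totally real number field of degree 2^k over ℚ for some integer k ≥ 1, such that every totally positive unit of O_K is the square of a unit, no element of K squares to 2, and 2 is not squarefree in O_K (i.e. there exists t ∈ O_K, not a unit, with t² dividing 2 in O_K). Then there is no universal ternary classical quadratic lattice over K. -/

import Mathlib

/-!
Write `C` for the set of `x ∈ 𝓞 K` with `x ^ 2 ∣ 2`, and suppose a universal ternary classical
lattice `L` exists.

The arithmetic input is a Kronecker-type bound: in a totally real field the only integer whose
conjugates all lie strictly between `0` and `2` is `1` (`eq_one_of_lt_two`). Fix `v₁ ∈ L` with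
`Q v₁ = 1`, and let `t ∈ C` be a totally positive nonunit, `t ^ 2 * π = 2`. If neither `t` nor
`2 / t` is a square, the bound forces `t`, `π` and `t * π` to be represented on the plane orthogonal
to `v₁`, and forces the vectors of norms `t` and `π` to be orthogonal. Expanding the vector of norm
`t * π` in this orthogonal basis gives `4 = 2 * b₁ ^ 2 + t * (t * b₂) ^ 2`, which the same bound rules
out (`square_class_of_sq_dvd_two`).

Since totally positive units are squares, Dirichlet's unit theorem provides units of every
signature (`exists_unit_mul_totallyPositive`), so total positivity costs nothing: every `x ∈ C` is,
up to a unit, `y ^ 2` or `2 / y ^ 2` with `y ∈ C` (`exists_descent`). Under `x ↦ y` the integer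
`[K : ℚ] * v_P x - v_2 (N x) * v_P 2` is divided by `± 2`, so it vanishes for every prime `P`
(`defect_eq_zero`). Hence `t ^ (2 ^ k)` and `2 ^ a` generate the same ideal, with `0 < a < 2 ^ k` when
`t ∈ C` is a nonunit. Cancelling the power of `2` in `a` leaves an odd power of `2` that is a square
times a totally positive unit, and such units are squares; thus `2` is a square in `K`
(`exists_sq_eq_two`), contrary to hypothesis.
-/

open NumberField

/-- An element of a number field is totally positive if it is positive in every
real embedding. -/
def TotallyPositive (K : Type*) [Field K] (α : K) : Prop :=
  ∀ σ : K →+* ℝ, 0 < σ α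

/-- `(Q, L)` is a universal ternary classical quadratic lattice over `K`:
`Q` is a totally positive definite quadratic form on `K³`, `L` is a finitely generated
`𝓞 K`-submodule spanning `K³` over `K`, the associated bilinear form is `𝓞 K`-valued
on `L`, and every totally positive integer is represented by `Q` on `L`. -/
def IsUniversalTernaryClassicalLattice (K : Type*) [Field K] [NumberField K]
    (Q : QuadraticForm K (Fin 3 → K)) (L : Submodule (𝓞 K) (Fin 3 → K)) : Prop :=
  (∀ v : Fin 3 → K, v ≠ 0 → TotallyPositive K (Q v)) ∧
  L.FG ∧
  Submodule.span K (L : Set (Fin 3 → K)) = ⊤ ∧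
  (∀ u ∈ L, ∀ w ∈ L, ∃ a : 𝓞 K, (a : K) = (Q (u + w) - Q u - Q w) / 2) ∧
  (∀ α : 𝓞 K, TotallyPositive K (α : K) → ∃ v ∈ L, Q v = (α : K))

/-! ### Totally positive elements -/

section TotallyPositiveElements

variable {K : Type*} [Field K]

lemma TotallyPositive.mul {a b : K} (ha : TotallyPositive K a) (hb : TotallyPositive K b) :
    TotallyPositive K (a * b) := fun σ => by
  rw [map_mul]; exact mul_pos (ha σ) (hb σ)

lemma TotallyPositive.of_mul_left {a b : K} (ha : TotallyPositive K a)
    (hab : TotallyPositive K (a * b)) : TotallyPositive K b := fun σ => by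
  have h := hab σ
  rw [map_mul] at h
  exact (mul_pos_iff_of_pos_left (ha σ)).1 h

lemma totallyPositive_sq {a : K} (ha : a ≠ 0) : TotallyPositive K (a ^ 2) := fun σ => by
  rw [map_pow]
  have : σ a ≠ 0 := (map_ne_zero σ).2 ha
  positivity

lemma totallyPositive_one : TotallyPositive K (1 : K) := fun σ => by
  rw [map_one]; exact one_pos

lemma totallyPositive_two : TotallyPositive K (2 : K) := fun σ => by
  rw [map_ofNat]; exact two_pos

end TotallyPositiveElements

section TotallyReal

variable {K : Type*} [Field K]

lemma exists_real_embedding (hTR : ∀ φ : K →+* ℂ, ∀ x : K, (φ x).im = 0) (φ : K →+* ℂ) :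
    ∃ σ : K →+* ℝ, ∀ x, (σ x : ℂ) = φ x := by
  have hφ : ComplexEmbedding.IsReal φ := by
    rw [ComplexEmbedding.isReal_iff]
    ext x
    rw [ComplexEmbedding.conjugate_coe_eq, Complex.conj_eq_iff_im]
    exact hTR φ x
  exact ⟨hφ.embedding, hφ.coe_embedding_apply⟩

variable [NumberField K]

/-- In a totally real field, `1` is the only integer all of whose conjugates lie strictly
between `0` and `2`: the conjugates of `a - 1` have absolute value less than `1`, so its norm
is `0`. -/
lemma eq_one_of_lt_two (hTR : ∀ φ : K →+* ℂ, ∀ x : K, (φ x).im = 0) {a : 𝓞 K}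
    (h0 : TotallyPositive K (a : K)) (h2 : TotallyPositive K (2 - (a : K))) : a = 1 := by
  by_contra hne
  have key : ∀ w : InfinitePlace K, w ((a - 1 : 𝓞 K) : K) < 1 := fun w => by
    obtain ⟨σ, hσ⟩ := exists_real_embedding hTR w.embedding
    rw [← InfinitePlace.norm_embedding_eq, ← hσ, Complex.norm_real, Real.norm_eq_abs, abs_lt]
    have h1 := h0 σ
    have h3 := h2 σ
    simp only [map_sub, map_ofNat, map_one] at h3 ⊢
    constructor <;> linarith
  obtain ⟨w⟩ : Nonempty (InfinitePlace K) := inferInstance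
  exact absurd (InfinitePlace.one_le_of_lt_one (w := w) (sub_ne_zero.2 hne) (fun z _ => key z))
    (not_le.2 (key w))

end TotallyReal

/-! ### Units of every signature -/

section Signature

variable {K : Type*} [Field K] [NumberField K]

lemma mk_ofReal_comp_injective :
    Function.Injective (fun σ : K →+* ℝ => InfinitePlace.mk (Complex.ofRealHom.comp σ)) := by
  intro σ τ h
  ext x
  rcases InfinitePlace.mk_eq_iff.1 h with h | h
  · have := RingHom.congr_fun h x
    simpa using this
  · have := RingHom.congr_fun h x
    simpa [ComplexEmbedding.conjugate_coe_eq] using this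

/-- The product of a sign and of the fundamental units in a given subset of a fundamental system.
When the torsion is `{±1}`, these products represent `(𝓞 K)ˣ` modulo squares. -/
noncomputable def signedUnit (K : Type*) [Field K] [NumberField K]
    (p : (Fin (Units.rank K) → Bool) × Bool) : (𝓞 K)ˣ :=
  (if p.2 then -1 else 1) * ∏ i, Units.fundSystem K i ^ ((p.1 i).toNat : ℤ)

lemma signedUnit_fst_eq {p q : (Fin (Units.rank K) → Bool) × Bool} {v : (𝓞 K)ˣ}
    (h : signedUnit K p * signedUnit K q = v ^ 2) : p.1 = q.1 := by
  have hneg : (-1 : (𝓞 K)ˣ) ∈ Units.torsion K := by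
    rw [Units.torsion, CommGroup.mem_torsion]
    exact isOfFinOrder_iff_pow_eq_one.2 ⟨2, by norm_num, by simp⟩
  have hs : ∀ b : Bool, (if b then -1 else 1 : (𝓞 K)ˣ) ∈ Units.torsion K := fun b => by
    cases b
    · simp
    · simpa using hneg
  obtain ⟨⟨ζ, e⟩, hv, -⟩ := Units.exist_unique_eq_mul_prod K v
  have hu := (Units.exist_unique_eq_mul_prod K (v ^ 2)).unique
    (y₁ := (ζ ^ 2, fun i => 2 * e i))
    (y₂ := (⟨_, hs p.2⟩ * ⟨_, hs q.2⟩, fun i => ((p.1 i).toNat : ℤ) + ((q.1 i).toNat : ℤ)))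
    (by
      simp only at hv ⊢
      rw [hv, mul_pow, ← Finset.prod_pow]
      congr 1
      refine Finset.prod_congr rfl fun i _ => ?_
      rw [mul_comm 2 (e i), zpow_mul]; rfl)
    (by
      simp only
      rw [← h, signedUnit, signedUnit]
      simp only [zpow_add, Finset.prod_mul_distrib, Subgroup.coe_mul]
      exact mul_mul_mul_comm _ _ _ _)
  funext i
  have := congrFun (congrArg Prod.snd hu) i
  simp only at this
  cases hp : p.1 i <;> cases hq : q.1 i <;> simp [hp, hq] at this ⊢ <;> omega

lemma embedding_unit_ne_zero (σ : K →+* ℝ) (u : (𝓞 K)ˣ) : σ ((u : 𝓞 K) : K) ≠ 0 := by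
  rw [map_ne_zero]; exact_mod_cast u.ne_zero

/-- If totally positive units are squares, units realise all signatures: the signature embeds
units modulo squares, of which there are at least `2 ^ [K : ℚ]` by Dirichlet's theorem, into a
group of that order. -/
lemma exists_unit_mul_totallyPositive (hTR : ∀ φ : K →+* ℂ, ∀ x : K, (φ x).im = 0)
    (hU : ∀ u : (𝓞 K)ˣ, TotallyPositive K ((u : 𝓞 K) : K) → ∃ v : (𝓞 K)ˣ, u = v ^ 2)
    {t : 𝓞 K} (ht : t ≠ 0) : ∃ u : (𝓞 K)ˣ, TotallyPositive K ((u * t : 𝓞 K) : K) := by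
  classical
  let S : (Fin (Units.rank K) → Bool) × Bool → ((K →+* ℝ) → Bool) :=
    fun p σ => decide (0 < σ ((signedUnit K p : 𝓞 K) : K))
  have hfin : Finite (K →+* ℝ) := Finite.of_injective _ (mk_ofReal_comp_injective (K := K))
  have hinj : Function.Injective S := by
    intro p q h
    have hsign : ∀ σ : K →+* ℝ,
        0 < σ ((signedUnit K p : 𝓞 K) : K) * σ ((signedUnit K q : 𝓞 K) : K) := by
      intro σ
      have h1 : (0 < σ ((signedUnit K p : 𝓞 K) : K)) ↔ (0 < σ ((signedUnit K q : 𝓞 K) : K)) := by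
        simpa [S] using congrFun h σ
      rcases lt_or_gt_of_ne (embedding_unit_ne_zero σ (signedUnit K p)) with hp | hp
      · rcases lt_or_gt_of_ne (embedding_unit_ne_zero σ (signedUnit K q)) with hq | hq
        · exact mul_pos_of_neg_of_neg hp hq
        · exact absurd (h1.2 hq) (not_lt.2 hp.le)
      · exact mul_pos hp (h1.1 hp)
    obtain ⟨v, hv⟩ := hU (signedUnit K p * signedUnit K q) (fun σ => by
      simpa using hsign σ)
    have h1 := signedUnit_fst_eq hv
    refine Prod.ext h1 ?_
    obtain ⟨φ⟩ : Nonempty (K →+* ℂ) := inferInstance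
    obtain ⟨σ, -⟩ := exists_real_embedding hTR φ
    by_contra h2
    have h3 : signedUnit K p = - signedUnit K q := by
      rw [signedUnit, signedUnit, h1]
      cases hp : p.2 <;> cases hq : q.2 <;> simp_all
    have h4 := hsign σ
    rw [h3] at h4
    simp only [Units.val_neg, map_neg] at h4
    nlinarith [mul_self_nonneg (σ ((signedUnit K q : 𝓞 K) : K))]
  have hcard : Nat.card ((K →+* ℝ) → Bool) ≤ Nat.card ((Fin (Units.rank K) → Bool) × Bool) := by
    have h1 : Nat.card (K →+* ℝ) ≤ Fintype.card (InfinitePlace K) := by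
      rw [← Nat.card_eq_fintype_card]
      exact Nat.card_le_card_of_injective _ (mk_ofReal_comp_injective (K := K))
    have h2 : 0 < Fintype.card (InfinitePlace K) := Fintype.card_pos
    rw [Nat.card_prod, Nat.card_fun, Nat.card_fun]
    simp only [Nat.card_eq_fintype_card (α := Bool), Nat.card_eq_fintype_card (α := Fin _),
      Fintype.card_bool, Fintype.card_fin, Units.rank]
    rw [← pow_succ]
    exact Nat.pow_le_pow_right (by norm_num) (by omega)
  obtain ⟨p, hp⟩ := (hinj.bijective_of_nat_card_le hcard).2 (fun σ => decide (0 < σ (t : K)))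
  refine ⟨signedUnit K p, fun σ => ?_⟩
  have h1 : (0 < σ ((signedUnit K p : 𝓞 K) : K)) ↔ 0 < σ (t : K) := by
    simpa [S] using congrFun hp σ
  have ht' : σ (t : K) ≠ 0 := by rw [map_ne_zero]; exact_mod_cast ht
  push_cast
  rw [map_mul]
  rcases lt_or_gt_of_ne ht' with h | h
  · have h3 := lt_of_le_of_ne (not_lt.1 (fun h' => absurd (h1.1 h') (not_lt.2 h.le)))
      (embedding_unit_ne_zero σ (signedUnit K p))
    exact mul_pos_of_neg_of_neg h3 h
  · exact mul_pos (h1.2 h) h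

end Signature

/-! ### Orthogonality in the ternary space -/

section Quadratic

variable {K : Type*} [Field K]

/-- Cauchy–Schwarz for a totally positive definite form, with polar form `2b`. -/
lemma cauchy_schwarz {V : Type*} [AddCommGroup V] [Module K V] {Q : QuadraticForm K V}
    (hQ : ∀ v, v ≠ 0 → TotallyPositive K (Q v)) {u w : V} (hu : u ≠ 0) (hu0 : Q u ≠ 0) {b : K}
    (hb : QuadraticMap.polar Q u w = 2 * b) :
    Q u * Q w = b ^ 2 ∨ TotallyPositive K (Q u * Q w - b ^ 2) := by
  have hz : Q (Q u • w + (-b) • u) = Q u * (Q u * Q w - b ^ 2) := by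
    rw [QuadraticMap.map_add (⇑Q), QuadraticMap.map_smul, QuadraticMap.map_smul,
      QuadraticMap.polar_smul_left, QuadraticMap.polar_smul_right, QuadraticMap.polar_comm, hb]
    simp only [smul_eq_mul]
    ring
  by_cases h : Q u • w + (-b) • u = 0
  · left
    rw [h, QuadraticMap.map_zero] at hz
    rcases mul_eq_zero.1 hz.symm with h | h
    · exact absurd h hu0
    · exact sub_eq_zero.1 h
  · right
    exact (hQ u hu).of_mul_left (hz ▸ hQ _ h)

/-- Parseval's identity for a vector orthogonal to the first member of an orthogonal basis. -/
lemma parseval [CharZero K] {Q : QuadraticForm K (Fin 3 → K)} (hQ : ∀ v, v ≠ 0 → Q v ≠ 0)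
    {v₀ v₁ v₂ w : Fin 3 → K} (h0 : v₀ ≠ 0) (h1 : v₁ ≠ 0) (h2 : v₂ ≠ 0)
    (h01 : QuadraticMap.polar Q v₀ v₁ = 0) (h02 : QuadraticMap.polar Q v₀ v₂ = 0)
    (h12 : QuadraticMap.polar Q v₁ v₂ = 0) (h0w : QuadraticMap.polar Q v₀ w = 0) {b₁ b₂ : K}
    (hb₁ : QuadraticMap.polar Q v₁ w = 2 * b₁) (hb₂ : QuadraticMap.polar Q v₂ w = 2 * b₂) :
    Q v₁ * Q v₂ * Q w = b₁ ^ 2 * Q v₂ + b₂ ^ 2 * Q v₁ := by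
  have q1 := hQ _ h1
  have q2 := hQ _ h2
  have h10 := h01
  have h20 := h02
  have h21 := h12
  rw [QuadraticMap.polar_comm] at h10 h20 h21
  set z := w - ((b₁ / Q v₁) • v₁ + (b₂ / Q v₂) • v₂) with hz
  have z0 : QuadraticMap.polar Q v₀ z = 0 := by
    simp [hz, QuadraticMap.polar_sub_right, QuadraticMap.polar_add_right,
      QuadraticMap.polar_smul_right, h01, h02, h0w]
  have z1 : QuadraticMap.polar Q v₁ z = 0 := by
    simp only [hz, QuadraticMap.polar_sub_right, QuadraticMap.polar_add_right,
      QuadraticMap.polar_smul_right, h12, hb₁, QuadraticMap.polar_self, smul_eq_mul, nsmul_eq_mul]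
    push_cast
    field_simp
    ring
  have z2 : QuadraticMap.polar Q v₂ z = 0 := by
    simp only [hz, QuadraticMap.polar_sub_right, QuadraticMap.polar_add_right,
      QuadraticMap.polar_smul_right, h21, hb₂, QuadraticMap.polar_self, smul_eq_mul, nsmul_eq_mul]
    push_cast
    field_simp
    ring
  have hz0 : z = 0 := by
    by_contra hne
    have z0' := z0
    have z1' := z1
    have z2' := z2
    rw [QuadraticMap.polar_comm] at z0' z1' z2'
    have hli : LinearIndependent K ![v₀, v₁, v₂, z] := by
      refine LinearMap.linearIndependent_of_isOrthoᵢ (B := Q.polarBilin) ?_ ?_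
      · rw [LinearMap.isOrthoᵢ_def]
        intro i j hij
        fin_cases i <;> fin_cases j <;>
          first
          | exact absurd rfl hij
          | exact h01
          | exact h02
          | exact h12
          | exact h10
          | exact h20
          | exact h21
          | exact z0
          | exact z1
          | exact z2
          | exact z0'
          | exact z1'
          | exact z2'
      · have hd : ∀ v, v ≠ 0 → QuadraticMap.polar Q v v ≠ 0 := fun v hv => by
          rw [QuadraticMap.polar_self]
          simpa using hQ v hv
        intro i
        fin_cases i
        exacts [hd _ h0, hd _ h1, hd _ h2, hd _ hne]
    have := hli.fintype_card_le_finrank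
    simp at this
  have hw : w = (b₁ / Q v₁) • v₁ + (b₂ / Q v₂) • v₂ := sub_eq_zero.1 hz0
  have hQw : Q w = b₁ ^ 2 / Q v₁ + b₂ ^ 2 / Q v₂ := by
    conv_lhs => rw [hw]
    rw [QuadraticMap.map_add (⇑Q), QuadraticMap.map_smul, QuadraticMap.map_smul,
      QuadraticMap.polar_smul_left, QuadraticMap.polar_smul_right, h12]
    simp only [smul_eq_mul]
    field_simp
    ring
  rw [hQw]
  field_simp

end Quadratic

/-! ### Divisors of two represented by the lattice -/

section Representation

variable {K : Type*} [Field K] [NumberField K]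

/-- A totally positive proper divisor `a` of `2` that is not a square is represented by the
orthogonal complement of a vector `v₁` of norm `1`. Otherwise some `v` of norm `a` has inner product
`x ≠ 0` with `v₁`, and `a ≻ x ^ 2` by Cauchy–Schwarz; multiplying by the nonunit `c = 2 / a` gives
`2 ≻ c * x ^ 2`, so that `c * x ^ 2 = 1`. -/
lemma isSquare_or_represented (hTR : ∀ φ : K →+* ℂ, ∀ x : K, (φ x).im = 0)
    {Q : QuadraticForm K (Fin 3 → K)} {L : Submodule (𝓞 K) (Fin 3 → K)}
    (h : IsUniversalTernaryClassicalLattice K Q L) {v₁ : Fin 3 → K} (hv₁ : v₁ ∈ L)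
    (hQv₁ : Q v₁ = 1) {a c : 𝓞 K} (ha : TotallyPositive K (a : K))
    (hc : TotallyPositive K (c : K)) (hcu : ¬ IsUnit c) (hac : a * c = 2) :
    (∃ y, y ^ 2 = a) ∨ ∃ w ∈ L, QuadraticMap.polar Q v₁ w = 0 ∧ Q w = a := by
  obtain ⟨hpos, -, -, hint, hrep⟩ := h
  obtain ⟨v, hv, hQv⟩ := hrep a ha
  obtain ⟨x, hx⟩ := hint v₁ hv₁ v hv
  have hx' : QuadraticMap.polar Q v₁ v = 2 * (x : K) := by
    rw [hx, QuadraticMap.polar]; ring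
  have hwL : v + (-(x : K)) • v₁ ∈ L := by
    have : v + (-(x : K)) • v₁ = v - x • v₁ := by
      rw [neg_smul, sub_eq_add_neg]; rfl
    rw [this]
    exact L.sub_mem hv (L.smul_mem x hv₁)
  have hQw : Q (v + (-(x : K)) • v₁) = a - x ^ 2 := by
    rw [QuadraticMap.map_add (⇑Q), QuadraticMap.map_smul, QuadraticMap.polar_smul_right,
      QuadraticMap.polar_comm, hx', hQv, hQv₁]
    simp only [smul_eq_mul]
    ring
  by_cases hw0 : v + (-(x : K)) • v₁ = 0
  · left
    rw [hw0, QuadraticMap.map_zero] at hQw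
    refine ⟨x, ?_⟩
    have : (x : K) ^ 2 = a := by linear_combination hQw
    exact_mod_cast this
  by_cases hx0 : x = 0
  · right
    exact ⟨v, hv, by simp [hx', hx0], hQv⟩
  exfalso
  have hacK : (a : K) * c = 2 := by
    simpa only [map_mul, map_ofNat] using congrArg (algebraMap (𝓞 K) K) hac
  have hxK : (x : K) ≠ 0 := by exact_mod_cast hx0
  have h1 : c * x ^ 2 = 1 := by
    refine eq_one_of_lt_two hTR ?_ ?_
    · push_cast
      exact hc.mul (totallyPositive_sq hxK)
    · have := hc.mul (hQw ▸ hpos _ hw0)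
      convert this using 1
      push_cast
      linear_combination -hacK
  exact hcu (IsUnit.of_mul_eq_one _ h1)

/-- A totally positive nonunit `t` with `t ^ 2 ∣ 2` is a square or twice a square (in `K`).
Otherwise `t`, `π = 2 / t ^ 2` and `t * π` are all represented by the binary complement of a
vector of norm `1`. Cauchy–Schwarz makes the vectors of norms `t` and `π` orthogonal, and
Parseval's identity for the vector of norm `t * π` has no solution. -/
lemma square_class_of_sq_dvd_two (hTR : ∀ φ : K →+* ℂ, ∀ x : K, (φ x).im = 0)
    (hno2 : ¬ ∃ x : K, x ^ 2 = 2)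
    {Q : QuadraticForm K (Fin 3 → K)} {L : Submodule (𝓞 K) (Fin 3 → K)}
    (h : IsUniversalTernaryClassicalLattice K Q L) {t : 𝓞 K} (ht : TotallyPositive K (t : K))
    (htu : ¬ IsUnit t) (ht2 : t ^ 2 ∣ 2) : (∃ y, t = y ^ 2) ∨ ∃ y, t * y ^ 2 = 2 := by
  by_contra hcon
  push Not at hcon
  obtain ⟨hsq, h2sq⟩ := hcon
  have hno2' : ∀ y : 𝓞 K, y ^ 2 ≠ 2 := fun y hy =>
    hno2 ⟨y, by simpa only [map_pow, map_ofNat] using congrArg (algebraMap (𝓞 K) K) hy⟩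
  obtain ⟨π, hπ⟩ := ht2
  have hπK : (2 : K) = t ^ 2 * π := by
    simpa only [map_mul, map_pow, map_ofNat] using congrArg (algebraMap (𝓞 K) K) hπ
  have ht0 : t ≠ 0 := by
    rintro rfl
    simp at hπ
  have htK : (t : K) ≠ 0 := by exact_mod_cast ht0
  have hπpos : TotallyPositive K (π : K) :=
    (totallyPositive_sq htK).of_mul_left (hπK ▸ totallyPositive_two)
  have hπ0 : π ≠ 0 := by
    rintro rfl
    simp at hπ
  have hπK0 : (π : K) ≠ 0 := by exact_mod_cast hπ0
  obtain ⟨v₁, hv₁, hQv₁⟩ := h.2.2.2.2 1 (by simpa using totallyPositive_one)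
  have hQv₁ : Q v₁ = 1 := by simpa using hQv₁
  have repr := @isSquare_or_represented K _ _ hTR Q L h v₁ hv₁ hQv₁
  have hpos := h.1
  have hint := h.2.2.2.1
  have hne : ∀ {v : Fin 3 → K}, Q v ≠ 0 → v ≠ 0 := by
    rintro v hv rfl
    simp at hv
  have hpolar : ∀ {u w}, u ∈ L → w ∈ L → ∃ b : 𝓞 K, QuadraticMap.polar Q u w = 2 * (b : K) := by
    intro u w hu hw
    obtain ⟨b, hb⟩ := hint u hu w hw
    exact ⟨b, by rw [hb, QuadraticMap.polar]; ring⟩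
  have htπ : TotallyPositive K ((t * π : 𝓞 K) : K) := by
    push_cast
    exact ht.mul hπpos
  rcases repr (a := t) (c := t * π) ht htπ (fun hu => htu (isUnit_of_mul_isUnit_left hu))
    (by rw [hπ]; ring) with ⟨y, hy⟩ | ⟨w₁, hw₁, hw₁o, hQw₁⟩
  · exact hsq y hy.symm
  rcases repr (a := π) (c := t ^ 2) hπpos (by push_cast; exact totallyPositive_sq htK)
    (fun hu => htu ((isUnit_pow_iff two_ne_zero).1 hu)) (by rw [hπ]; ring)
    with ⟨y, hy⟩ | ⟨w₂, hw₂, hw₂o, hQw₂⟩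
  · exact hno2' (t * y) (by rw [hπ, ← hy]; ring)
  rcases repr (a := t * π) (c := t) htπ ht htu (by rw [hπ]; ring)
    with ⟨y, hy⟩ | ⟨w₃, hw₃, hw₃o, hQw₃⟩
  · exact h2sq y (by rw [hπ, hy]; ring)
  have n1 : w₁ ≠ 0 := hne (by rw [hQw₁]; exact htK)
  have n2 : w₂ ≠ 0 := hne (by rw [hQw₂]; exact hπK0)
  have n0 : v₁ ≠ 0 := hne (by rw [hQv₁]; exact one_ne_zero)
  have hanis : ∀ v, v ≠ 0 → Q v ≠ 0 := by
    intro v hv hQ0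
    obtain ⟨φ⟩ : Nonempty (K →+* ℂ) := inferInstance
    obtain ⟨σ, -⟩ := exists_real_embedding hTR φ
    have := hpos v hv σ
    simp [hQ0] at this
  have h12 : QuadraticMap.polar Q w₁ w₂ = 0 := by
    obtain ⟨b, hb⟩ := hpolar hw₁ hw₂
    by_cases hb0 : b = 0
    · simp [hb, hb0]
    exfalso
    have hbK : (b : K) ≠ 0 := by exact_mod_cast hb0
    rcases cauchy_schwarz hpos n1 (hanis _ n1) hb with h | h
    · rw [hQw₁, hQw₂] at h
      have h' : t * π = b ^ 2 := by exact_mod_cast h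
      exact h2sq b (by rw [hπ, ← h']; ring)
    · rw [hQw₁, hQw₂] at h
      have h1 : t * b ^ 2 = 1 := by
        refine eq_one_of_lt_two hTR ?_ ?_
        · push_cast
          exact ht.mul (totallyPositive_sq hbK)
        · convert ht.mul h using 1
          push_cast
          linear_combination hπK
      exact htu (IsUnit.of_mul_eq_one _ h1)
  obtain ⟨b₁, hb₁⟩ := hpolar hw₁ hw₃
  obtain ⟨b₂, hb₂⟩ := hpolar hw₂ hw₃
  have hpar := parseval hanis n0 n1 n2 hw₁o hw₂o h12 hw₃o hb₁ hb₂
  rw [hQw₁, hQw₂, hQw₃] at hpar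
  have hpar' : t * π * (t * π) = b₁ ^ 2 * π + b₂ ^ 2 * t := by exact_mod_cast hpar
  have hmain : 2 ^ 2 = b₁ ^ 2 * 2 + t * (t * b₂) ^ 2 := by
    linear_combination t ^ 2 * hpar' + (2 + t ^ 2 * π - b₁ ^ 2) * hπ
  by_cases hb₁0 : b₁ = 0
  · rw [hb₁0] at hmain
    have hdvd : (t * b₂) ^ 2 ∣ 2 ^ 2 := ⟨t, by rw [hmain]; ring⟩
    rw [IsIntegrallyClosed.pow_dvd_pow_iff two_ne_zero] at hdvd
    obtain ⟨q, hq⟩ := hdvd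
    refine hsq q ?_
    have hn : (t * b₂) ^ 2 ≠ 0 := by
      intro h0
      rw [h0] at hmain
      norm_num at hmain
    apply mul_left_cancel₀ hn
    have : (2 : 𝓞 K) ^ 2 = (t * b₂ * q) ^ 2 := by rw [← hq]
    linear_combination this - hmain
  by_cases hb₂0 : b₂ = 0
  · rw [hb₂0] at hmain
    refine hno2' b₁ ?_
    apply mul_left_cancel₀ (two_ne_zero (α := 𝓞 K))
    linear_combination -hmain
  have hmainK : (2 : K) ^ 2 = b₁ ^ 2 * 2 + t * (t * b₂) ^ 2 := by
    simpa only [map_mul, map_pow, map_add, map_ofNat] using congrArg (algebraMap (𝓞 K) K) hmain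
  have hb₁K : (b₁ : K) ≠ 0 := by exact_mod_cast hb₁0
  have hb₂K : (b₂ : K) ≠ 0 := by exact_mod_cast hb₂0
  have hone : b₁ ^ 2 = 1 := by
    refine eq_one_of_lt_two hTR ?_ ?_
    · push_cast
      exact totallyPositive_sq hb₁K
    · refine totallyPositive_two.of_mul_left ?_
      have := ht.mul (totallyPositive_sq (mul_ne_zero htK hb₂K))
      convert this using 1
      push_cast
      linear_combination hmainK
  exact h2sq (t * b₂) (by linear_combination -2 * hone - hmain)

/-- Up to units, every `x` with `x ^ 2 ∣ 2` is `y ^ 2` or `2 / y ^ 2` for a `y` with the same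
property. -/
lemma exists_descent (hTR : ∀ φ : K →+* ℂ, ∀ x : K, (φ x).im = 0)
    (hU : ∀ u : (𝓞 K)ˣ, TotallyPositive K ((u : 𝓞 K) : K) → ∃ v : (𝓞 K)ˣ, u = v ^ 2)
    (hno2 : ¬ ∃ x : K, x ^ 2 = 2)
    {Q : QuadraticForm K (Fin 3 → K)} {L : Submodule (𝓞 K) (Fin 3 → K)}
    (h : IsUniversalTernaryClassicalLattice K Q L) {x : 𝓞 K} (hx : x ^ 2 ∣ 2) :
    ∃ (y : 𝓞 K) (u : (𝓞 K)ˣ), y ^ 2 ∣ 2 ∧ (u * x = y ^ 2 ∨ u * x * y ^ 2 = 2) := by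
  by_cases hxu : IsUnit x
  · obtain ⟨v, rfl⟩ := hxu
    exact ⟨1, v⁻¹, by simp, Or.inl (by simp)⟩
  have hx0 : x ≠ 0 := by
    rintro rfl
    simp at hx
  obtain ⟨u, hu⟩ := exists_unit_mul_totallyPositive hTR hU hx0
  have hux : (u * x) ^ 2 ∣ 2 := by
    rw [mul_pow]
    exact (((u.isUnit.pow 2).mul_left_dvd)).2 hx
  rcases square_class_of_sq_dvd_two hTR hno2 h hu
    (fun hu' => hxu (isUnit_of_mul_isUnit_right hu')) hux with ⟨y, hy⟩ | ⟨y, hy⟩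
  · refine ⟨y, u, ?_, Or.inl hy⟩
    rw [hy] at hux
    exact (dvd_pow_self _ two_ne_zero).trans hux
  · exact ⟨y, u, ⟨u * x, by rw [← hy]; ring⟩, Or.inr hy⟩

end Representation

/-! ### Infinite descent on valuations -/

section Descent

variable {K : Type*} [Field K] [NumberField K]

/-- The valuation of `x` at a prime ideal `P`. -/
noncomputable def idealCount (P : Ideal (𝓞 K)) (x : 𝓞 K) : ℕ := by
  classical
  exact (UniqueFactorizationMonoid.normalizedFactors (Ideal.span {x})).count P

/-- The `2`-adic valuation of the norm of `x`. -/
noncomputable def normVal (x : 𝓞 K) : ℕ := padicValNat 2 (Algebra.norm ℤ x).natAbs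

lemma span_ne_zero {x : 𝓞 K} (hx : x ≠ 0) : Ideal.span {x} ≠ 0 := by
  simpa [Ideal.zero_eq_bot] using hx

lemma idealCount_mul (P : Ideal (𝓞 K)) {x y : 𝓞 K} (hx : x ≠ 0) (hy : y ≠ 0) :
    idealCount P (x * y) = idealCount P x + idealCount P y := by
  classical
  rw [idealCount, idealCount, idealCount, ← Ideal.span_singleton_mul_span_singleton,
    UniqueFactorizationMonoid.normalizedFactors_mul (span_ne_zero hx) (span_ne_zero hy),
    Multiset.count_add]

lemma idealCount_unit (P : Ideal (𝓞 K)) (u : (𝓞 K)ˣ) : idealCount P (u : 𝓞 K) = 0 := by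
  rw [idealCount, Ideal.span_singleton_eq_top.2 u.isUnit, ← Ideal.one_eq_top,
    UniqueFactorizationMonoid.normalizedFactors_one]
  simp

lemma idealCount_pow (P : Ideal (𝓞 K)) {x : 𝓞 K} (hx : x ≠ 0) (n : ℕ) :
    idealCount P (x ^ n) = n * idealCount P x := by
  induction n with
  | zero => simpa using idealCount_unit P 1
  | succ n ih => rw [pow_succ, idealCount_mul P (pow_ne_zero _ hx) hx, ih]; ring

lemma associated_of_idealCount {x y : 𝓞 K} (hx : x ≠ 0) (hy : y ≠ 0)
    (h : ∀ P, idealCount P x = idealCount P y) : Associated x y := by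
  classical
  rw [← Ideal.span_singleton_eq_span_singleton, ← associated_iff_eq,
    UniqueFactorizationMonoid.associated_iff_normalizedFactors_eq_normalizedFactors
      (span_ne_zero hx) (span_ne_zero hy)]
  exact Multiset.ext.2 h

lemma normVal_mul {x y : 𝓞 K} (hx : x ≠ 0) (hy : y ≠ 0) :
    normVal (x * y) = normVal x + normVal y := by
  rw [normVal, map_mul, Int.natAbs_mul, padicValNat.mul]
  · rfl
  · simpa using hx
  · simpa using hy

lemma normVal_unit (u : (𝓞 K)ˣ) : normVal (u : 𝓞 K) = 0 := by
  have := u.isUnit.map (Algebra.norm ℤ : 𝓞 K →* ℤ)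
  rw [normVal, Int.isUnit_iff_natAbs_eq.1 this]
  simp

lemma normVal_two : normVal (2 : 𝓞 K) = Module.finrank ℚ K := by
  have h : Algebra.norm ℤ (2 : 𝓞 K) = 2 ^ Module.finrank ℚ K := by
    have := Algebra.norm_algebraMap_of_basis (RingOfIntegers.basis K) (2 : ℤ)
    rw [map_ofNat, ← Module.finrank_eq_card_basis (RingOfIntegers.basis K),
      RingOfIntegers.rank] at this
    exact this
  rw [normVal, h, Int.natAbs_pow]
  simp

/-- The failure of `x ^ [K : ℚ]` and `2 ^ normVal x` to have the same valuation at `P`. -/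
noncomputable def defect (P : Ideal (𝓞 K)) (x : 𝓞 K) : ℤ :=
  Module.finrank ℚ K * idealCount P x - normVal x * idealCount P 2

lemma defect_mul (P : Ideal (𝓞 K)) {x y : 𝓞 K} (hx : x ≠ 0) (hy : y ≠ 0) :
    defect P (x * y) = defect P x + defect P y := by
  rw [defect, defect, defect, idealCount_mul P hx hy, normVal_mul hx hy]
  push_cast
  ring

lemma defect_unit (P : Ideal (𝓞 K)) (u : (𝓞 K)ˣ) : defect P (u : 𝓞 K) = 0 := by
  simp [defect, idealCount_unit, normVal_unit]

lemma defect_two (P : Ideal (𝓞 K)) : defect P (2 : 𝓞 K) = 0 := by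
  simp [defect, normVal_two]

/-- The descent `x ↦ y` divides the defect by `± 2`, so the defect is `0`. -/
lemma defect_eq_zero
    (hdesc : ∀ x : 𝓞 K, x ^ 2 ∣ 2 →
      ∃ (y : 𝓞 K) (u : (𝓞 K)ˣ), y ^ 2 ∣ 2 ∧ (u * x = y ^ 2 ∨ u * x * y ^ 2 = 2))
    (P : Ideal (𝓞 K)) {t : 𝓞 K} (ht : t ^ 2 ∣ 2) : defect P t = 0 := by
  have key : ∀ n : ℕ, ∀ x : 𝓞 K, x ^ 2 ∣ 2 → (2 : ℤ) ^ n ∣ defect P x := by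
    intro n
    induction n with
    | zero => intro x _; simp
    | succ n ih =>
      intro x hx
      obtain ⟨y, u, hy, h⟩ := hdesc x hx
      have hx0 : x ≠ 0 := by
        rintro rfl
        simp at hx
      have hy0 : y ≠ 0 := by
        rintro rfl
        simp at hy
      have e1 : defect P (u * x) = defect P x := by
        rw [defect_mul P u.ne_zero hx0, defect_unit, zero_add]
      have e2 : defect P (y ^ 2) = 2 * defect P y := by
        rw [pow_two, defect_mul P hy0 hy0, two_mul]
      obtain ⟨m, hm⟩ := ih y hy
      rcases h with h | h
      · exact ⟨m, by rw [← e1, h, e2, hm]; ring⟩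
      · refine ⟨-m, ?_⟩
        have e3 := congrArg (defect P) h
        rw [defect_mul P (mul_ne_zero u.ne_zero hx0) (pow_ne_zero 2 hy0), e1, e2, defect_two,
          hm] at e3
        linear_combination e3
  refine Int.eq_zero_of_abs_lt_dvd (key (defect P t).natAbs t ht) ?_
  rw [Int.abs_eq_natAbs]
  exact_mod_cast Nat.lt_two_pow_self

/-- Vanishing defects say that `t ^ (2 ^ k)` and `2 ^ a` generate the same ideal, where
`a = normVal t` satisfies `0 < a < 2 ^ k`. Writing `a = 2 ^ i * r` with `r` odd and extracting
`2 ^ i`-th roots of ideals, `2 ^ r` is a totally positive unit times a square, so `2` is a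
square. -/
lemma exists_sq_eq_two {k : ℕ} (hdeg : Module.finrank ℚ K = 2 ^ k)
    (hU : ∀ u : (𝓞 K)ˣ, TotallyPositive K ((u : 𝓞 K) : K) → ∃ v : (𝓞 K)ˣ, u = v ^ 2)
    {t : 𝓞 K} (htu : ¬ IsUnit t) (ht : t ^ 2 ∣ 2) (hdef : ∀ P, defect P t = 0) :
    ∃ x : K, x ^ 2 = 2 := by
  have ht0 : t ≠ 0 := by
    rintro rfl
    simp at ht
  have htK : (t : K) ≠ 0 := by exact_mod_cast ht0
  have h1 : ∀ P, 2 ^ k * idealCount P t = normVal t * idealCount P (2 : 𝓞 K) := by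
    intro P
    have := hdef P
    rw [defect, hdeg, sub_eq_zero] at this
    exact_mod_cast this
  have ha0 : normVal t ≠ 0 := by
    intro h0
    apply htu
    rw [← associated_one_iff_isUnit]
    refine associated_of_idealCount ht0 one_ne_zero fun P => ?_
    have := h1 P
    rw [h0, zero_mul] at this
    have h2 : idealCount P (1 : 𝓞 K) = 0 := by simpa using idealCount_unit P (1 : (𝓞 K)ˣ)
    rw [h2]
    simpa using this
  have halt : normVal t < 2 ^ k := by
    obtain ⟨π, hπ⟩ := ht
    have hπ0 : π ≠ 0 := by
      rintro rfl
      simp at hπ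
    have := congrArg normVal hπ
    rw [normVal_two, hdeg, normVal_mul (pow_ne_zero 2 ht0) hπ0, pow_two,
      normVal_mul ht0 ht0] at this
    omega
  obtain ⟨i, r, ⟨s, hr⟩, hir⟩ := Nat.exists_eq_two_pow_mul_odd ha0
  have hik : i < k := by
    rw [← Nat.pow_lt_pow_iff_right (a := 2) (by norm_num)]
    refine lt_of_le_of_lt ?_ halt
    rw [hir]
    exact Nat.le_mul_of_pos_right _ (by omega)
  obtain ⟨j, rfl⟩ : ∃ j, k = i + (j + 1) := ⟨k - i - 1, by omega⟩
  have hassoc : Associated (t ^ 2 ^ (j + 1)) ((2 : 𝓞 K) ^ r) := by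
    refine associated_of_idealCount (pow_ne_zero _ ht0) (pow_ne_zero _ two_ne_zero) fun P => ?_
    rw [idealCount_pow P ht0, idealCount_pow P two_ne_zero]
    have h3 := h1 P
    rw [hir, pow_add, mul_assoc, mul_assoc] at h3
    exact Nat.eq_of_mul_eq_mul_left (by positivity) h3
  obtain ⟨u, hu⟩ := hassoc
  have huK : ((t : K) ^ 2 ^ j) ^ 2 * ((u : 𝓞 K) : K) = 2 ^ r := by
    have := congrArg (algebraMap (𝓞 K) K) hu
    rw [← pow_mul, ← pow_succ]
    simpa only [map_mul, map_pow, map_ofNat] using this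
  obtain ⟨v, hv⟩ := hU u (by
    refine (totallyPositive_sq (pow_ne_zero (2 ^ j) htK)).of_mul_left ?_
    rw [huK]
    intro σ
    rw [map_pow, map_ofNat]
    positivity)
  refine ⟨(t : K) ^ 2 ^ j * ((v : 𝓞 K) : K) / 2 ^ s, ?_⟩
  rw [hv, hr] at huK
  push_cast at huK
  rw [div_pow, mul_pow, huK]
  field_simp
  ring

end Descent

/-- A totally real field of degree `2^k` in which all totally positive units are
squares of units, `√2 ∉ K`, and `2` is not squarefree, admits no universal ternary
classical quadratic lattice. -/
theorem no_universal_ternary_of_two_not_squarefree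
    (K : Type*) [Field K] [NumberField K]
    (hTR : ∀ φ : K →+* ℂ, ∀ x : K, (φ x).im = 0)
    (k : ℕ) (hk : 1 ≤ k) (hdeg : Module.finrank ℚ K = 2 ^ k)
    (hU : ∀ u : (𝓞 K)ˣ, TotallyPositive K ((u : 𝓞 K) : K) → ∃ v : (𝓞 K)ˣ, u = v ^ 2)
    (hno2 : ¬ ∃ x : K, x ^ 2 = 2)
    (hnsf : ∃ t : 𝓞 K, ¬ IsUnit t ∧ t ^ 2 ∣ 2) :
    ¬ ∃ (Q : QuadraticForm K (Fin 3 → K)) (L : Submodule (𝓞 K) (Fin 3 → K)),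
      IsUniversalTernaryClassicalLattice K Q L := by
  rintro ⟨Q, L, h⟩
  obtain ⟨t, htu, ht⟩ := hnsf
  exact hno2 (exists_sq_eq_two hdeg hU htu ht fun P =>
    defect_eq_zero (fun x hx => exists_descent hTR hU hno2 h hx) P ht)
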